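/- arXiv:1901.09184 — 4 statements merged into one kernel-verified Lean document; each statement's English description precedes it below -/
import Mathlib

section
/- Soft Probabilistic Robust Policy Iteration for the PR-MDP converges linearly: for any step size η ∈ (0,1] and all k ≥ 1, ‖v_k − v*_{P,α}‖_∞ ≤ (1 − η + γη) ‖v_{k−1} − v*_{P,α}‖_∞, where v_k = v^{π_k, π̄_k} is the value of the k-th joint policy and v*_{P,α} is the optimal probabilistic robust value (the unique fixed point of the PR-MDP minimax Bellman operator). In particular, for η = 1 (Probabilistic Robust Policy Iteration) the values converge to the unique Nash-equilibrium value with contraction rate γ. -/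
open MeasureTheory

/-!
Because reward and transitions of the PR-MDP are mixtures, every Bellman operator splits. With
`q_v(s,a) = r(s,a) + γ Σ_{s'} P(s'|s,a) v(s')`, `M v = max_a q_v` and `m v = min_a q_v`,

* `T^{μ,ν} v = (1-α) ∫ q_v dμ + α ∫ q_v dν` (`Tpol_PR`),
* the minimax operator is `T v = (1-α) M v + α m v` (`iSup_iInf_Tpol`).

All these operators `F` satisfy `v ≤ w + c → F v ≤ F w + γ c` for constants `c` of either sign
(`Discounting`), which contains monotonicity and contraction, and yields the comparison principle
`v ≤ F v`, `F w ≤ w` imply `v ≤ w` (`Discounting.comparison`).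

If `π` is a best response to `ν`, then `w = v^{π,ν}` solves `w = (1-α) M w + α ∫ q_w dν`
(`vVal_bestResponse`). Hence `T v_k ≤ v_k`, so `v* ≤ v_k` for all `k`. Moreover
`T^{π_{k+1},π̄_{k+1}} v_k ≤ (1-α) M v_k + α ((1-η) ∫ q_{v_k} dπ̄_k + η m v_k)
  = (1-η) v_k + η T v_k ≤ v_k`,
so `v_{k+1} ≤ v_k` by comparison, and applying `T^{π_{k+1},π̄_{k+1}}` to this inequality gives
`v_{k+1} ≤ (1-η) v_k + η T v_k`. Subtracting `v* = T v*` and using the `γ`-contraction of `T`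
yields `0 ≤ v_{k+1} - v* ≤ (1 - η + γ η) ‖v_k - v*‖`.
-/

/-- Expected one-step reward `r^{μ,ν}(s) = ∫_A ∫_B r(s,a,b) dν(s)(b) dμ(s)(a)`. -/
noncomputable def rPol {S A B : Type*} [MeasurableSpace A] [MeasurableSpace B]
    (r : S → A → B → ℝ)
    (μ : S → ProbabilityMeasure A) (ν : S → ProbabilityMeasure B) (s : S) : ℝ :=
  ∫ a, ∫ b, r s a b ∂(ν s : Measure B) ∂(μ s : Measure A)

/-- Induced stochastic matrix `P^{μ,ν}(s,s') = ∫_A ∫_B P(s'|s,a,b) dν(s)(b) dμ(s)(a)`. -/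
noncomputable def Pmat {S A B : Type*} [Fintype S] [MeasurableSpace A] [MeasurableSpace B]
    (P : S → S → A → B → ℝ)
    (μ : S → ProbabilityMeasure A) (ν : S → ProbabilityMeasure B) : Matrix S S ℝ :=
  Matrix.of fun s s' => ∫ a, ∫ b, P s s' a b ∂(ν s : Measure B) ∂(μ s : Measure A)

/-- Fixed-policy Bellman operator `T^{μ,ν} v = r^{μ,ν} + γ P^{μ,ν} v`. -/
noncomputable def Tpol {S A B : Type*} [Fintype S] [MeasurableSpace A] [MeasurableSpace B]
    (γ : ℝ) (r : S → A → B → ℝ) (P : S → S → A → B → ℝ)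
    (μ : S → ProbabilityMeasure A) (ν : S → ProbabilityMeasure B)
    (v : S → ℝ) : S → ℝ :=
  fun s => rPol r μ ν s + γ * (Pmat P μ ν).mulVec v s

/-- Value of the pair of stationary policies: `v^{μ,ν} = Σ_{t≥0} γ^t (P^{μ,ν})^t r^{μ,ν}`. -/
noncomputable def vVal {S A B : Type*} [Fintype S] [DecidableEq S]
    [MeasurableSpace A] [MeasurableSpace B]
    (γ : ℝ) (r : S → A → B → ℝ) (P : S → S → A → B → ℝ)
    (μ : S → ProbabilityMeasure A) (ν : S → ProbabilityMeasure B) : S → ℝ :=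
  ∑' t : ℕ, γ ^ t • ((Pmat P μ ν ^ t).mulVec (rPol r μ ν))

/-- PR-MDP two-player reward `r_{P,α}(s,a,b) = (1-α) r(s,a) + α r(s,b)`. -/
noncomputable def rPR {S A : Type*} (α : ℝ) (r : S → A → ℝ) : S → A → A → ℝ :=
  fun s a b => (1 - α) * r s a + α * r s b

/-- PR-MDP two-player transitions `P_{P,α}(s'|s,a,b) = (1-α) P(s'|s,a) + α P(s'|s,b)`. -/
noncomputable def PPR {S A : Type*} (α : ℝ) (P : S → S → A → ℝ) : S → S → A → A → ℝ :=
  fun s s' a b => (1 - α) * P s s' a + α * P s s' b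

/-- Single-agent expected reward `r^μ(s) = ∫_A r(s,a) dμ(s)(a)`. -/
noncomputable def rPol1 {S A : Type*} [MeasurableSpace A]
    (r : S → A → ℝ) (μ : S → ProbabilityMeasure A) (s : S) : ℝ :=
  ∫ a, r s a ∂(μ s : Measure A)

/-- Single-agent induced stochastic matrix `P^μ(s,s') = ∫_A P(s'|s,a) dμ(s)(a)`. -/
noncomputable def Pmat1 {S A : Type*} [Fintype S] [MeasurableSpace A]
    (P : S → S → A → ℝ) (μ : S → ProbabilityMeasure A) : Matrix S S ℝ :=
  Matrix.of fun s s' => ∫ a, P s s' a ∂(μ s : Measure A)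

/-- The deterministic stationary policy `d : S → A`, identified with Dirac measures. -/
noncomputable def detPol {S A : Type*} [MeasurableSpace A] (d : S → A) :
    S → ProbabilityMeasure A :=
  fun s => ⟨MeasureTheory.Measure.dirac (d s), inferInstance⟩

/-- The state-action value `q_v(s,a) = r(s,a) + γ Σ_{s'} P(s'|s,a) v(s')`. -/
noncomputable def qVal {S A : Type*} [Fintype S] (γ : ℝ) (r : S → A → ℝ) (P : S → S → A → ℝ)
    (v : S → ℝ) (s : S) (a : A) : ℝ :=
  r s a + γ * ∑ s', P s s' a * v s'

/-- The PR-MDP minimax operator in closed form,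
`T v (s) = (1-α) max_a q_v(s,a) + α min_a q_v(s,a)`. -/
noncomputable def Topt {S A : Type*} [Fintype S] (γ α : ℝ) (r : S → A → ℝ) (P : S → S → A → ℝ)
    (v : S → ℝ) (s : S) : ℝ :=
  (1 - α) * (⨆ a, qVal γ r P v s a) + α * (⨅ a, qVal γ r P v s a)

/-- An operator on value functions that shrinks constant upper shifts by the factor `γ`. The
constant `c` may be negative; `c = 0` is monotonicity. -/
def Discounting {S : Type*} (γ : ℝ) (F : (S → ℝ) → S → ℝ) : Prop :=
  ∀ (v w : S → ℝ) (c : ℝ), (∀ s, v s ≤ w s + c) → ∀ s, F v s ≤ F w s + γ * c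

/-- Comparison principle: a subsolution lies below a supersolution. At a state where `v - w` is
maximal, with maximum `c`, the discounting property gives `c ≤ γ c`. -/
lemma Discounting.comparison {S : Type*} [Fintype S] {γ : ℝ} (hγ : γ < 1)
    {F : (S → ℝ) → S → ℝ} (hF : Discounting γ F) {v w : S → ℝ}
    (hv : ∀ s, v s ≤ F v s) (hw : ∀ s, F w s ≤ w s) (s : S) : v s ≤ w s := by
  have : Nonempty S := ⟨s⟩
  obtain ⟨s₀, h₀⟩ := Finite.exists_max fun s => v s - w s
  have h := hF v w (v s₀ - w s₀) (fun s => by linarith [h₀ s]) s₀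
  have h1 : (1 - γ) * (v s₀ - w s₀) ≤ 0 := by linarith [hv s₀, hw s₀]
  have h2 : v s₀ - w s₀ ≤ 0 := by
    by_contra hc
    nlinarith [mul_pos (sub_pos.2 hγ) (not_le.1 hc)]
  linarith [h₀ s]

section

set_option linter.unusedSectionVars false

variable {S A : Type*} [Fintype S] [MetricSpace A] [CompactSpace A] [MeasurableSpace A]
  [BorelSpace A]

lemma integrable_of_cont {f : A → ℝ} (hf : Continuous f) (μ : ProbabilityMeasure A) :
    Integrable f (μ : Measure A) :=
  hf.integrable_of_hasCompactSupport (HasCompactSupport.of_compactSpace f)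

lemma continuous_qVal (γ : ℝ) {r : S → A → ℝ} (hr : ∀ s, Continuous fun a : A => r s a)
    {P : S → S → A → ℝ} (hP : ∀ s s', Continuous fun a : A => P s s' a) (v : S → ℝ) (s : S) :
    Continuous (qVal γ r P v s) :=
  (hr s).add (continuous_const.mul
    (continuous_finsetSum _ fun s' _ => (hP s s').mul continuous_const))

lemma qVal_shift {γ : ℝ} (hγ : 0 ≤ γ) (r : S → A → ℝ) {P : S → S → A → ℝ}
    (hP0 : ∀ s s' a, 0 ≤ P s s' a) (hPsum : ∀ s a, ∑ s', P s s' a = 1)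
    {v w : S → ℝ} {c : ℝ} (h : ∀ s, v s ≤ w s + c) (s : S) (a : A) :
    qVal γ r P v s a ≤ qVal γ r P w s a + γ * c := by
  have h1 : ∑ s', P s s' a * v s' ≤ ∑ s', P s s' a * w s' + c := by
    calc ∑ s', P s s' a * v s' ≤ ∑ s', P s s' a * (w s' + c) :=
          Finset.sum_le_sum fun s' _ => mul_le_mul_of_nonneg_left (h s') (hP0 s s' a)
      _ = ∑ s', P s s' a * w s' + c := by
          simp only [mul_add, Finset.sum_add_distrib, ← Finset.sum_mul, hPsum, one_mul]
  have := mul_le_mul_of_nonneg_left h1 hγ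
  unfold qVal
  linarith

lemma integral_shift {f g : A → ℝ} (hf : Continuous f) (hg : Continuous g) {c : ℝ}
    (h : ∀ a, f a ≤ g a + c) (μ : ProbabilityMeasure A) :
    ∫ a, f a ∂(μ : Measure A) ≤ ∫ a, g a ∂(μ : Measure A) + c := by
  have h1 := integral_mono (integrable_of_cont hf μ)
    ((integrable_of_cont hg μ).add (integrable_const c)) h
  have h2 : ∫ a, (g + fun _ : A => c) a ∂(μ : Measure A) = ∫ a, g a ∂(μ : Measure A) + c := by
    simp only [Pi.add_apply]
    rw [integral_add (integrable_of_cont hg μ) (integrable_const c)]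
    simp
  linarith

lemma bddAbove_of_cont {f : A → ℝ} (hf : Continuous f) : BddAbove (Set.range f) :=
  (isCompact_range hf).bddAbove

lemma bddBelow_of_cont {f : A → ℝ} (hf : Continuous f) : BddBelow (Set.range f) :=
  (isCompact_range hf).bddBelow

lemma integral_le_iSup {f : A → ℝ} (hf : Continuous f) (μ : ProbabilityMeasure A) :
    ∫ a, f a ∂(μ : Measure A) ≤ ⨆ a, f a := by
  have := integral_shift hf (g := fun _ => 0) continuous_const (c := ⨆ a, f a)
    (fun a => by simpa using le_ciSup (bddAbove_of_cont hf) a) μ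
  simpa using this

lemma iInf_le_integral {f : A → ℝ} (hf : Continuous f) (μ : ProbabilityMeasure A) :
    ⨅ a, f a ≤ ∫ a, f a ∂(μ : Measure A) := by
  have := integral_shift (f := fun _ => ⨅ a, f a) (c := 0) continuous_const hf
    (fun a => by simpa using ciInf_le (bddBelow_of_cont hf) a) μ
  simpa using this

lemma integral_detPol {f : A → ℝ} (d : S → A) (s : S) :
    ∫ a, f a ∂(detPol d s : Measure A) = f (d s) := by
  change ∫ a, f a ∂(Measure.dirac (d s)) = f (d s)
  exact integral_dirac _ _

lemma exists_eq_iSup [Nonempty A] {f : A → ℝ} (hf : Continuous f) : ∃ a, f a = ⨆ a, f a := by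
  obtain ⟨a, -, ha⟩ := isCompact_univ.exists_isMaxOn Set.univ_nonempty hf.continuousOn
  exact ⟨a, le_antisymm (le_ciSup (bddAbove_of_cont hf) a)
    (ciSup_le fun b => ha (Set.mem_univ b))⟩

lemma exists_eq_iInf [Nonempty A] {f : A → ℝ} (hf : Continuous f) : ∃ a, f a = ⨅ a, f a := by
  obtain ⟨a, -, ha⟩ := isCompact_univ.exists_isMinOn Set.univ_nonempty hf.continuousOn
  exact ⟨a, le_antisymm (le_ciInf fun b => ha (Set.mem_univ b))
    (ciInf_le (bddBelow_of_cont hf) a)⟩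

lemma integral_integral_mix (α : ℝ) {f : A → ℝ} (hf : Continuous f)
    (μ ν : ProbabilityMeasure A) :
    ∫ a, ∫ b, ((1 - α) * f a + α * f b) ∂(ν : Measure A) ∂(μ : Measure A)
      = (1 - α) * ∫ a, f a ∂(μ : Measure A) + α * ∫ b, f b ∂(ν : Measure A) := by
  have h : ∀ a, ∫ b, ((1 - α) * f a + α * f b) ∂(ν : Measure A)
      = (1 - α) * f a + α * ∫ b, f b ∂(ν : Measure A) := fun a => by
    rw [integral_add (integrable_const _) ((integrable_of_cont hf ν).const_mul α)]
    simp [integral_const_mul]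
  simp only [h]
  rw [integral_add ((integrable_of_cont hf μ).const_mul _) (integrable_const _),
    integral_const_mul]
  simp

lemma integral_qVal (γ : ℝ) {r : S → A → ℝ} (hr : ∀ s, Continuous fun a : A => r s a)
    {P : S → S → A → ℝ} (hP : ∀ s s', Continuous fun a : A => P s s' a)
    (v : S → ℝ) (μ : S → ProbabilityMeasure A) (s : S) :
    ∫ a, qVal γ r P v s a ∂(μ s : Measure A)
      = rPol1 r μ s + γ * (Pmat1 P μ).mulVec v s := by
  have hi : ∀ s' ∈ Finset.univ, Integrable (fun a => P s s' a * v s') (μ s : Measure A) :=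
    fun s' _ => (integrable_of_cont (hP s s') (μ s)).mul_const _
  unfold qVal
  rw [integral_add (integrable_of_cont (hr s) (μ s)) ((integrable_finsetSum _ hi).const_mul γ),
    integral_const_mul, integral_finsetSum _ hi]
  simp only [integral_mul_const]
  rfl

lemma Pmat_PR (α : ℝ) {P : S → S → A → ℝ} (hP : ∀ s s', Continuous fun a : A => P s s' a)
    (μ ν : S → ProbabilityMeasure A) (v : S → ℝ) (s : S) :
    (Pmat (PPR α P) μ ν).mulVec v s
      = (1 - α) * (Pmat1 P μ).mulVec v s + α * (Pmat1 P ν).mulVec v s := by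
  simp only [Matrix.mulVec, dotProduct, Pmat, Pmat1, PPR, Matrix.of_apply, Finset.mul_sum,
    integral_integral_mix α (hP _ _)]
  rw [← Finset.sum_add_distrib]
  exact Finset.sum_congr rfl fun s' _ => by ring

lemma Tpol_PR (γ α : ℝ) {r : S → A → ℝ} (hr : ∀ s, Continuous fun a : A => r s a)
    {P : S → S → A → ℝ} (hP : ∀ s s', Continuous fun a : A => P s s' a)
    (μ ν : S → ProbabilityMeasure A) (v : S → ℝ) (s : S) :
    Tpol γ (rPR α r) (PPR α P) μ ν v s
      = (1 - α) * ∫ a, qVal γ r P v s a ∂(μ s : Measure A)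
        + α * ∫ a, qVal γ r P v s a ∂(ν s : Measure A) := by
  rw [integral_qVal γ hr hP, integral_qVal γ hr hP, Tpol, Pmat_PR α hP]
  simp only [rPol, rPR, integral_integral_mix α (hr s), rPol1]
  ring

lemma discounting_Tpol {γ α : ℝ} (hγ : 0 ≤ γ) (hα : α ∈ Set.Icc (0 : ℝ) 1)
    {r : S → A → ℝ} (hr : ∀ s, Continuous fun a : A => r s a)
    {P : S → S → A → ℝ} (hP : ∀ s s', Continuous fun a : A => P s s' a)
    (hP0 : ∀ s s' a, 0 ≤ P s s' a) (hPsum : ∀ s a, ∑ s', P s s' a = 1)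
    (μ ν : S → ProbabilityMeasure A) :
    Discounting γ (Tpol γ (rPR α r) (PPR α P) μ ν) := by
  intro v w c h s
  have key := fun ρ : ProbabilityMeasure A =>
    integral_shift (continuous_qVal γ hr hP v s) (continuous_qVal γ hr hP w s)
      (qVal_shift hγ r hP0 hPsum h s) ρ
  rw [Tpol_PR γ α hr hP, Tpol_PR γ α hr hP]
  linarith [mul_le_mul_of_nonneg_left (key (μ s)) (sub_nonneg.2 hα.2),
    mul_le_mul_of_nonneg_left (key (ν s)) hα.1]

lemma discounting_Topt [Nonempty A] {γ α : ℝ} (hγ : 0 ≤ γ) (hα : α ∈ Set.Icc (0 : ℝ) 1)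
    {r : S → A → ℝ} (hr : ∀ s, Continuous fun a : A => r s a)
    {P : S → S → A → ℝ} (hP : ∀ s s', Continuous fun a : A => P s s' a)
    (hP0 : ∀ s s' a, 0 ≤ P s s' a) (hPsum : ∀ s a, ∑ s', P s s' a = 1) :
    Discounting γ (Topt γ α r P) := by
  intro v w c h s
  have hq := qVal_shift hγ r hP0 hPsum h s
  have h1 : ⨆ a, qVal γ r P v s a ≤ (⨆ a, qVal γ r P w s a) + γ * c :=
    ciSup_le fun a => (hq a).trans
      (by linarith [le_ciSup (bddAbove_of_cont (continuous_qVal γ hr hP w s)) a])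
  have h2 : (⨅ a, qVal γ r P v s a) - γ * c ≤ ⨅ a, qVal γ r P w s a :=
    le_ciInf fun a => by
      linarith [hq a, ciInf_le (bddBelow_of_cont (continuous_qVal γ hr hP v s)) a]
  unfold Topt
  linarith [mul_le_mul_of_nonneg_left h1 (sub_nonneg.2 hα.2), mul_le_mul_of_nonneg_left h2 hα.1]

/-- Both extrema are attained at deterministic policies, so the `⨆⨅` of the statement is taken
over bounded families and has its expected value. -/
lemma iSup_iInf_Tpol [Nonempty A] {γ α : ℝ} (hα : α ∈ Set.Icc (0 : ℝ) 1)
    {r : S → A → ℝ} (hr : ∀ s, Continuous fun a : A => r s a)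
    {P : S → S → A → ℝ} (hP : ∀ s s', Continuous fun a : A => P s s' a) (v : S → ℝ) (s : S) :
    (⨆ μ : S → ProbabilityMeasure A, ⨅ ν : S → ProbabilityMeasure A,
      Tpol γ (rPR α r) (PPR α P) μ ν v s) = Topt γ α r P v s := by
  have hq := continuous_qVal γ hr hP v s
  obtain ⟨a, ha⟩ := exists_eq_iSup hq
  obtain ⟨b, hb⟩ := exists_eq_iInf hq
  have : Nonempty (S → ProbabilityMeasure A) := ⟨detPol fun _ => a⟩
  have hinner : ∀ μ : S → ProbabilityMeasure A,
      (⨅ ν : S → ProbabilityMeasure A, Tpol γ (rPR α r) (PPR α P) μ ν v s)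
        = (1 - α) * ∫ a, qVal γ r P v s a ∂(μ s : Measure A)
          + α * ⨅ a, qVal γ r P v s a := by
    intro μ
    simp only [Tpol_PR γ α hr hP]
    have hlow : ∀ ν : S → ProbabilityMeasure A,
        (1 - α) * ∫ a, qVal γ r P v s a ∂(μ s : Measure A) + α * ⨅ a, qVal γ r P v s a
          ≤ (1 - α) * ∫ a, qVal γ r P v s a ∂(μ s : Measure A)
            + α * ∫ a, qVal γ r P v s a ∂(ν s : Measure A) := fun ν => by
      linarith [mul_le_mul_of_nonneg_left (iInf_le_integral hq (ν s)) hα.1]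
    refine le_antisymm ?_ (le_ciInf hlow)
    refine (ciInf_le ⟨_, Set.forall_mem_range.2 hlow⟩ (detPol fun _ => b)).trans ?_
    rw [integral_detPol, hb]
  simp only [hinner]
  have hup : ∀ μ : S → ProbabilityMeasure A,
      (1 - α) * ∫ a, qVal γ r P v s a ∂(μ s : Measure A) + α * ⨅ a, qVal γ r P v s a
        ≤ Topt γ α r P v s := fun μ => by
    unfold Topt
    linarith [mul_le_mul_of_nonneg_left (integral_le_iSup hq (μ s)) (sub_nonneg.2 hα.2)]
  refine le_antisymm (ciSup_le hup) ?_
  refine le_trans ?_ (le_ciSup ⟨_, Set.forall_mem_range.2 hup⟩ (detPol fun _ => a))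
  rw [integral_detPol, ha]
  exact le_rfl

/-- The transition matrix of a policy pair is a sup-norm contraction. This is the case `γ = 1`,
`r = 0` of the discounting property. -/
lemma norm_Pmat_mulVec_le {α : ℝ} (hα : α ∈ Set.Icc (0 : ℝ) 1)
    {P : S → S → A → ℝ} (hP : ∀ s s', Continuous fun a : A => P s s' a)
    (hP0 : ∀ s s' a, 0 ≤ P s s' a) (hPsum : ∀ s a, ∑ s', P s s' a = 1)
    (μ ν : S → ProbabilityMeasure A) (v : S → ℝ) :
    ‖(Pmat (PPR α P) μ ν).mulVec v‖ ≤ ‖v‖ := by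
  have hd := discounting_Tpol (γ := 1) (r := fun (_ : S) (_ : A) => (0 : ℝ)) zero_le_one hα
    (fun _ => continuous_const) hP hP0 hPsum μ ν
  have hT : ∀ u s, Tpol 1 (rPR α fun (_ : S) (_ : A) => (0 : ℝ)) (PPR α P) μ ν u s
      = (Pmat (PPR α P) μ ν).mulVec u s := fun u s => by simp [Tpol, rPol, rPR]
  have hb : ∀ s, |v s| ≤ ‖v‖ := fun s => norm_le_pi_norm v s
  refine (pi_norm_le_iff_of_nonneg (norm_nonneg v)).2 fun s => abs_le.2 ⟨?_, ?_⟩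
  · have := hd 0 v ‖v‖ (fun s => by simpa using by linarith [(abs_le.1 (hb s)).1]) s
    rw [hT, hT, Matrix.mulVec_zero] at this
    simp only [Pi.zero_apply] at this
    linarith
  · have := hd v 0 ‖v‖ (fun s => by simpa using (abs_le.1 (hb s)).2) s
    rw [hT, hT, Matrix.mulVec_zero] at this
    simp only [Pi.zero_apply] at this
    linarith

/-- The discounted series converges and its sum solves the fixed-policy Bellman equation. -/
lemma vVal_fixed [DecidableEq S] {γ α : ℝ} (hγ : γ ∈ Set.Ioo (0 : ℝ) 1)
    (hα : α ∈ Set.Icc (0 : ℝ) 1) (r : S → A → ℝ)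
    {P : S → S → A → ℝ} (hP : ∀ s s', Continuous fun a : A => P s s' a)
    (hP0 : ∀ s s' a, 0 ≤ P s s' a) (hPsum : ∀ s a, ∑ s', P s s' a = 1)
    (μ ν : S → ProbabilityMeasure A) (s : S) :
    Tpol γ (rPR α r) (PPR α P) μ ν (vVal γ (rPR α r) (PPR α P) μ ν) s
      = vVal γ (rPR α r) (PPR α P) μ ν s := by
  set Q := Pmat (PPR α P) μ ν with hQ
  set ρ := rPol (rPR α r) μ ν with hρ
  have hpow : ∀ t : ℕ, ‖(Q ^ t).mulVec ρ‖ ≤ ‖ρ‖ := by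
    intro t
    induction t with
    | zero => simp
    | succ t ih =>
      rw [pow_succ', ← Matrix.mulVec_mulVec]
      exact (norm_Pmat_mulVec_le hα hP hP0 hPsum μ ν _).trans ih
  have hsum : Summable fun t : ℕ => γ ^ t • (Q ^ t).mulVec ρ := by
    refine Summable.of_norm_bounded
      ((summable_geometric_of_lt_one hγ.1.le hγ.2).mul_right ‖ρ‖) fun t => ?_
    rw [norm_smul, norm_pow, Real.norm_of_nonneg hγ.1.le]
    exact mul_le_mul_of_nonneg_left (hpow t) (pow_nonneg hγ.1.le t)
  have hv : vVal γ (rPR α r) (PPR α P) μ ν = ∑' t : ℕ, γ ^ t • (Q ^ t).mulVec ρ := rfl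
  have hstep : vVal γ (rPR α r) (PPR α P) μ ν
      = ρ + γ • Q.mulVec (vVal γ (rPR α r) (PPR α P) μ ν) := by
    have hmap := (LinearMap.toContinuousLinearMap Q.mulVecLin).map_tsum hsum
    simp only [LinearMap.coe_toContinuousLinearMap', Matrix.mulVecLin_apply] at hmap
    have hQs : Summable fun t : ℕ => Q.mulVec (γ ^ t • (Q ^ t).mulVec ρ) :=
      hsum.map Q.mulVecLin (LinearMap.continuous_of_finiteDimensional _)
    conv_lhs => rw [hv, hsum.tsum_eq_zero_add]
    rw [hv, hmap, ← tsum_const_smul'' γ]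
    congr 1
    · simp
    · refine tsum_congr fun t => ?_
      rw [Matrix.mulVec_smul, Matrix.mulVec_mulVec, ← pow_succ', smul_smul, ← pow_succ']
  exact (congrFun hstep s).symm

/-- Optimality equation for a best response `π` to `ν`. The inequality `≤` is the Bellman equation
of `π`; for `≥`, the policy that is greedy for the value of `π` would otherwise improve on `π`. -/
lemma vVal_bestResponse [DecidableEq S] [Nonempty A] {γ α : ℝ} (hγ : γ ∈ Set.Ioo (0 : ℝ) 1)
    (hα : α ∈ Set.Icc (0 : ℝ) 1) {r : S → A → ℝ} (hr : ∀ s, Continuous fun a : A => r s a)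
    {P : S → S → A → ℝ} (hP : ∀ s s', Continuous fun a : A => P s s' a)
    (hP0 : ∀ s s' a, 0 ≤ P s s' a) (hPsum : ∀ s a, ∑ s', P s s' a = 1)
    {π ν : S → ProbabilityMeasure A} {w : S → ℝ} (hw : w = vVal γ (rPR α r) (PPR α P) π ν)
    (hπ : ∀ (μ : S → ProbabilityMeasure A) (s : S),
      vVal γ (rPR α r) (PPR α P) μ ν s ≤ w s) (s : S) :
    w s = (1 - α) * (⨆ a, qVal γ r P w s a)
      + α * ∫ a, qVal γ r P w s a ∂(ν s : Measure A) := by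
  have hle : ∀ s, w s ≤ (1 - α) * (⨆ a, qVal γ r P w s a)
      + α * ∫ a, qVal γ r P w s a ∂(ν s : Measure A) := fun s => by
    have h := vVal_fixed hγ hα r hP hP0 hPsum π ν s
    rw [← hw, Tpol_PR γ α hr hP] at h
    linarith [mul_le_mul_of_nonneg_left
      (integral_le_iSup (continuous_qVal γ hr hP w s) (π s)) (sub_nonneg.2 hα.2)]
  choose d hd using fun s => exists_eq_iSup (continuous_qVal γ hr hP w s)
  have hT : ∀ s, Tpol γ (rPR α r) (PPR α P) (detPol d) ν w s
      = (1 - α) * (⨆ a, qVal γ r P w s a)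
        + α * ∫ a, qVal γ r P w s a ∂(ν s : Measure A) := fun s => by
    rw [Tpol_PR γ α hr hP, integral_detPol, hd]
  have hdisc := discounting_Tpol hγ.1.le hα hr hP hP0 hPsum (detPol d) ν
  have hfix := vVal_fixed hγ hα r hP hP0 hPsum (detPol d) ν
  have hcmp := hdisc.comparison hγ.2 (v := w) (fun s => (hT s).symm ▸ hle s)
    (fun s => (hfix s).le)
  have hmono := hdisc _ _ 0 (fun s => by simpa using hcmp s) s
  rw [hfix, hT] at hmono
  exact le_antisymm (hle s) (by linarith [hπ (detPol d) s])

end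

theorem stmt14 {S A : Type*} [Fintype S] [DecidableEq S]
    [MetricSpace A] [CompactSpace A] [Nonempty A] [MeasurableSpace A] [BorelSpace A]
    (γ : ℝ) (hγ : γ ∈ Set.Ioo (0:ℝ) 1)
    (α : ℝ) (hα : α ∈ Set.Icc (0:ℝ) 1)
    (r : S → A → ℝ) (hr : ∀ s, Continuous fun a : A => r s a)
    (P : S → S → A → ℝ)
    (hPcont : ∀ s s', Continuous fun a : A => P s s' a)
    (hP0 : ∀ s s' a, 0 ≤ P s s' a) (hP1 : ∀ s s' a, P s s' a ≤ 1)
    (hPsum : ∀ s a, ∑ s', P s s' a = 1)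
    (η : ℝ) (hη : η ∈ Set.Ioc (0:ℝ) 1)
    (πseq : ℕ → S → ProbabilityMeasure A) (πbseq πb'seq : ℕ → S → ProbabilityMeasure A)
    (hπ : ∀ (k : ℕ) (π : S → ProbabilityMeasure A) (s : S),
        vVal γ (rPR α r) (PPR α P) π (πbseq k) s
          ≤ vVal γ (rPR α r) (PPR α P) (πseq k) (πbseq k) s)
    (hπb' : ∀ (k : ℕ) (πb : S → ProbabilityMeasure A) (s : S),
        rPol1 r (πb'seq k) s
            + γ * (Pmat1 P (πb'seq k)).mulVec
                (vVal γ (rPR α r) (PPR α P) (πseq k) (πbseq k)) s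
          ≤ rPol1 r πb s
            + γ * (Pmat1 P πb).mulVec
                (vVal γ (rPR α r) (PPR α P) (πseq k) (πbseq k)) s)
    (hmix : ∀ (k : ℕ) (s : S), (πbseq (k + 1) s : MeasureTheory.Measure A)
        = ENNReal.ofReal (1 - η) • (πbseq k s : MeasureTheory.Measure A)
          + ENNReal.ofReal η • (πb'seq k s : MeasureTheory.Measure A))
    (vstar : S → ℝ)
    (hfix : ∀ s : S, (⨆ μ : S → ProbabilityMeasure A, ⨅ ν : S → ProbabilityMeasure A,
        Tpol γ (rPR α r) (PPR α P) μ ν vstar s) = vstar s)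
    (huniq : ∀ w : S → ℝ,
        (∀ s : S, (⨆ μ : S → ProbabilityMeasure A, ⨅ ν : S → ProbabilityMeasure A,
            Tpol γ (rPR α r) (PPR α P) μ ν w s) = w s) → w = vstar) :
    ∀ k : ℕ,
      ‖vVal γ (rPR α r) (PPR α P) (πseq (k + 1)) (πbseq (k + 1)) - vstar‖
        ≤ (1 - η + γ * η) * ‖vVal γ (rPR α r) (PPR α P) (πseq k) (πbseq k) - vstar‖ := by
  intro k
  obtain ⟨hη0, hη1⟩ := hη
  set v := vVal γ (rPR α r) (PPR α P) (πseq k) (πbseq k) with hv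
  set v' := vVal γ (rPR α r) (PPR α P) (πseq (k + 1)) (πbseq (k + 1)) with hv'
  have hstar : ∀ s, Topt γ α r P vstar s = vstar s := fun s => by
    rw [← iSup_iInf_Tpol hα hr hPcont]
    exact hfix s
  have hdopt := discounting_Topt hγ.1.le hα hr hPcont hP0 hPsum
  have hbr := vVal_bestResponse hγ hα hr hPcont hP0 hPsum hv (hπ k)
  have hbr' := vVal_bestResponse hγ hα hr hPcont hP0 hPsum hv' (hπ (k + 1))
  have hoptv : ∀ s, Topt γ α r P v s ≤ v s := fun s => by
    rw [Topt]
    linarith [hbr s, mul_le_mul_of_nonneg_left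
      (iInf_le_integral (continuous_qVal γ hr hPcont v s) (πbseq k s)) hα.1]
  have hoptv' : ∀ s, Topt γ α r P v' s ≤ v' s := fun s => by
    rw [Topt]
    linarith [hbr' s, mul_le_mul_of_nonneg_left
      (iInf_le_integral (continuous_qVal γ hr hPcont v' s) (πbseq (k + 1) s)) hα.1]
  have hlow' : ∀ s, vstar s ≤ v' s :=
    hdopt.comparison hγ.2 (fun s => (hstar s).ge) (fun s => hoptv' s)
  -- The adversary's greedy policy attains the minimum of `q_v`: compare it with a Dirac policy.
  have hgreedy : ∀ s, ∫ a, qVal γ r P v s a ∂(πb'seq k s : Measure A)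
      = ⨅ a, qVal γ r P v s a := fun s => by
    have hq := continuous_qVal γ hr hPcont v s
    refine le_antisymm ?_ (iInf_le_integral hq _)
    obtain ⟨b, hb⟩ := exists_eq_iInf hq
    have h := hπb' k (detPol fun _ => b) s
    rw [← hv, ← integral_qVal γ hr hPcont, ← integral_qVal γ hr hPcont, integral_detPol, hb] at h
    exact h
  have hmixint : ∀ s, ∫ a, qVal γ r P v s a ∂(πbseq (k + 1) s : Measure A)
      = (1 - η) * ∫ a, qVal γ r P v s a ∂(πbseq k s : Measure A)
        + η * ⨅ a, qVal γ r P v s a := fun s => by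
    have hq := continuous_qVal γ hr hPcont v s
    rw [hmix, integral_add_measure
      ((integrable_of_cont hq _).smul_measure ENNReal.ofReal_ne_top)
      ((integrable_of_cont hq _).smul_measure ENNReal.ofReal_ne_top),
      integral_smul_measure, integral_smul_measure, hgreedy,
      ENNReal.toReal_ofReal (sub_nonneg.2 hη1), ENNReal.toReal_ofReal hη0.le]
    rfl
  have hTv : ∀ s, Tpol γ (rPR α r) (PPR α P) (πseq (k + 1)) (πbseq (k + 1)) v s
      ≤ (1 - η) * v s + η * Topt γ α r P v s := fun s => by
    have h1 := mul_le_mul_of_nonneg_left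
      (integral_le_iSup (continuous_qVal γ hr hPcont v s) (πseq (k + 1) s)) (sub_nonneg.2 hα.2)
    have h2 := congrArg ((1 - η) * ·) (hbr s)
    rw [Tpol_PR γ α hr hPcont, hmixint, Topt]
    linarith
  have hdisc := discounting_Tpol hγ.1.le hα hr hPcont hP0 hPsum (πseq (k + 1)) (πbseq (k + 1))
  have hfix' := vVal_fixed hγ hα r hPcont hP0 hPsum (πseq (k + 1)) (πbseq (k + 1))
  rw [← hv'] at hfix'
  have hdecr : ∀ s, v' s ≤ v s :=
    hdisc.comparison hγ.2 (fun s => (hfix' s).ge) fun s => (hTv s).trans (by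
      linarith [mul_le_mul_of_nonneg_left (hoptv s) hη0.le])
  have hub : ∀ s, v' s ≤ (1 - η) * v s + η * Topt γ α r P v s := fun s => by
    have h := hdisc v' v 0 (fun s => by simpa using hdecr s) s
    rw [hfix'] at h
    linarith [hTv s]
  set N := ‖v - vstar‖ with hN
  have hvN : ∀ s, v s ≤ vstar s + N := fun s => by
    have h := (le_abs_self _).trans (norm_le_pi_norm (v - vstar) s)
    rw [Pi.sub_apply] at h
    linarith
  have hN0 : 0 ≤ N := norm_nonneg _
  have hrate : 0 ≤ 1 - η + γ * η := by nlinarith [mul_pos hγ.1 hη0]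
  refine (pi_norm_le_iff_of_nonneg (mul_nonneg hrate hN0)).2 fun s => ?_
  rw [Pi.sub_apply, Real.norm_of_nonneg (sub_nonneg.2 (hlow' s))]
  have hc := hdopt v vstar N hvN s
  rw [hstar] at hc
  linarith [hub s, mul_le_mul_of_nonneg_left (hvN s) (sub_nonneg.2 hη1),
    mul_le_mul_of_nonneg_left hc hη0.le]
end

section
/- Let S be a finite set, γ ∈ (0,1), let P and P' be row-stochastic S×S real matrices, and let r, r' ∈ ℝ^S. For η ∈ [0,1] set P_η = (1−η)P + ηP' and r_η = (1−η)r + ηr'. Then I − γP_η is invertible for every η ∈ [0,1], the value v_η := (I − γP_η)^{-1} r_η is differentiable in η, and its one-sided derivative at η = 0 equals (I − γP)^{-1} ( (r' + γP' v_0) − (r + γP v_0) ). Consequently, the direction of steepest change of the value of the mixture policy is determined by the one-step Bellman quantity r' + γP' v_0. -/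
/-! For row-stochastic `P_η` the matrix `A_η = I - γ P_η` is strictly diagonally dominant, hence
invertible. Since `A_η v_η = r_η` and both `A_η` and `r_η` are affine in `η`,
`A_η (v_η - v_ξ) = r_η - A_η v_ξ = (η - ξ) d` with `d = (r' + γ P' v_ξ) - (r + γ P v_ξ)`.
So the slope of `v` between `ξ` and `η` is exactly `A_η⁻¹ d`, which tends to `A_ξ⁻¹ d` by
continuity of matrix inversion (`hasDerivAt_vmix`). -/

/-- Mixture transition matrix `P_η = (1-η) P + η P'`. -/
noncomputable def Pmix {S : Type*} (P P' : Matrix S S ℝ) (η : ℝ) : Matrix S S ℝ :=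
  (1 - η) • P + η • P'

/-- Mixture reward `r_η = (1-η) r + η r'`. -/
noncomputable def rmix {S : Type*} (r r' : S → ℝ) (η : ℝ) : S → ℝ :=
  (1 - η) • r + η • r'

/-- Value of the mixture policy: `v_η = (I - γ P_η)⁻¹ r_η`. -/
noncomputable def vmix {S : Type*} [Fintype S] [DecidableEq S]
    (γ : ℝ) (P P' : Matrix S S ℝ) (r r' : S → ℝ) (η : ℝ) : S → ℝ :=
  ((1 : Matrix S S ℝ) - γ • Pmix P P' η)⁻¹.mulVec (rmix r r' η)

/-- `I - γ Q` is strictly diagonally dominant when `Q` is row-stochastic and `0 < γ < 1`. -/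
lemma isUnit_one_sub_smul {S : Type*} [Fintype S] [DecidableEq S]
    {γ : ℝ} (hγ : γ ∈ Set.Ioo (0:ℝ) 1) {Q : Matrix S S ℝ}
    (hQ0 : ∀ s s', 0 ≤ Q s s') (hQrow : ∀ s, ∑ s', Q s s' = 1) :
    IsUnit ((1 : Matrix S S ℝ) - γ • Q) := by
  rw [Matrix.isUnit_iff_isUnit_det, isUnit_iff_ne_zero]
  apply det_ne_zero_of_sum_row_lt_diag
  intro k
  have h1 : ∑ j ∈ Finset.univ.erase k, ‖((1 : Matrix S S ℝ) - γ • Q) k j‖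
      = γ * ∑ j ∈ Finset.univ.erase k, Q k j := by
    rw [Finset.mul_sum]
    refine Finset.sum_congr rfl fun j hj => ?_
    have hkj : k ≠ j := (Finset.ne_of_mem_erase hj).symm
    simp [Matrix.one_apply_ne hkj, abs_of_pos hγ.1, abs_of_nonneg (hQ0 k j)]
  have h2 := Finset.add_sum_erase Finset.univ (fun j => Q k j) (Finset.mem_univ k)
  simp only [hQrow k] at h2
  rw [h1]
  refine lt_of_lt_of_le ?_ (le_abs_self _)
  simp only [Matrix.sub_apply, Matrix.one_apply_eq, Matrix.smul_apply, smul_eq_mul]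
  have h3 : γ * (Q k k + ∑ j ∈ Finset.univ.erase k, Q k j) = γ := by rw [h2, mul_one]
  linarith [hγ.2]

lemma hasDerivAt_vmix {S : Type*} [Fintype S] [DecidableEq S]
    (γ : ℝ) (P P' : Matrix S S ℝ) (r r' : S → ℝ) (ξ : ℝ)
    (hξ : IsUnit ((1 : Matrix S S ℝ) - γ • Pmix P P' ξ)) :
    HasDerivAt (fun η : ℝ => vmix γ P P' r r' η)
      (((1 : Matrix S S ℝ) - γ • Pmix P P' ξ)⁻¹.mulVec
        ((r' + γ • P'.mulVec (vmix γ P P' r r' ξ))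
          - (r + γ • P.mulVec (vmix γ P P' r r' ξ)))) ξ := by
  set A : ℝ → Matrix S S ℝ := fun η => 1 - γ • Pmix P P' η with hA
  set v := vmix γ P P' r r' ξ with hv
  set d := (r' + γ • P'.mulVec v) - (r + γ • P.mulVec v) with hd
  have hAc : Continuous A := by
    unfold A Pmix
    fun_prop
  have hdet : (A ξ).det ≠ 0 := ((Matrix.isUnit_iff_isUnit_det _).1 hξ).ne_zero
  have hdetc : Continuous fun η => (A η).det := hAc.matrix_det
  have hinv : ContinuousAt (fun η => (A η)⁻¹) ξ := by
    simp only [Matrix.inv_def, Ring.inverse_eq_inv']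
    exact (hdetc.continuousAt.inv₀ hdet).smul hAc.matrix_adjugate.continuousAt
  have hlim : Filter.Tendsto (fun η => (A η)⁻¹.mulVec d) (nhdsWithin ξ {ξ}ᶜ)
      (nhds ((A ξ)⁻¹.mulVec d)) := by
    have hc : Continuous fun M : Matrix S S ℝ => M.mulVec d :=
      continuous_id.matrix_mulVec continuous_const
    exact (hc.continuousAt.comp hinv).tendsto.mono_left nhdsWithin_le_nhds
  have hAv : (A ξ).mulVec v = rmix r r' ξ := by
    rw [hv, vmix, Matrix.mulVec_mulVec, Matrix.mul_nonsing_inv _ hdet.isUnit, Matrix.one_mulVec]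
  have key : ∀ η, rmix r r' η = (A η).mulVec v + (η - ξ) • d := by
    intro η
    -- `A_η v + (η - ξ) d` and `r_η` have the same slope in `η` and agree at `η = ξ`.
    have h1 : rmix r r' η = rmix r r' ξ + (η - ξ) • (r' - r) := by
      simp only [rmix]
      module
    rw [h1, ← hAv]
    simp only [hA, hd, Pmix, Matrix.sub_mulVec, Matrix.smul_mulVec, Matrix.add_mulVec,
      Matrix.one_mulVec]
    module
  rw [hasDerivAt_iff_tendsto_slope]
  refine hlim.congr' ?_
  filter_upwards [self_mem_nhdsWithin,
    nhdsWithin_le_nhds (hdetc.continuousAt.eventually_ne hdet)] with η hne hη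
  have hsub : vmix γ P P' r r' η = v + (η - ξ) • (A η)⁻¹.mulVec d := by
    rw [vmix, key η, Matrix.mulVec_add, Matrix.mulVec_mulVec,
      Matrix.nonsing_inv_mul _ (Ne.isUnit hη), Matrix.one_mulVec, Matrix.mulVec_smul]
  rw [slope_def_module, hsub, ← hv, add_sub_cancel_left, smul_smul,
    inv_mul_cancel₀ (sub_ne_zero.2 hne), one_smul]

theorem stmt15 {S : Type*} [Fintype S] [DecidableEq S]
    (γ : ℝ) (hγ : γ ∈ Set.Ioo (0:ℝ) 1)
    (P P' : Matrix S S ℝ)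
    (hP0 : ∀ s s', 0 ≤ P s s') (hProw : ∀ s, ∑ s', P s s' = 1)
    (hP'0 : ∀ s s', 0 ≤ P' s s') (hP'row : ∀ s, ∑ s', P' s s' = 1)
    (r r' : S → ℝ) :
    (∀ η ∈ Set.Icc (0:ℝ) 1, IsUnit ((1 : Matrix S S ℝ) - γ • Pmix P P' η))
    ∧ DifferentiableOn ℝ (fun η : ℝ => vmix γ P P' r r' η) (Set.Icc 0 1)
    ∧ HasDerivWithinAt (fun η : ℝ => vmix γ P P' r r' η)
        (((1 : Matrix S S ℝ) - γ • P)⁻¹.mulVec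
          ((r' + γ • P'.mulVec (vmix γ P P' r r' 0))
            - (r + γ • P.mulVec (vmix γ P P' r r' 0))))
        (Set.Ici 0) 0 := by
  have hunit : ∀ η ∈ Set.Icc (0:ℝ) 1, IsUnit ((1 : Matrix S S ℝ) - γ • Pmix P P' η) := by
    intro η hη
    refine isUnit_one_sub_smul hγ (fun s s' => ?_) (fun s => ?_)
    · simp only [Pmix, Matrix.add_apply, Matrix.smul_apply, smul_eq_mul]
      exact add_nonneg (mul_nonneg (sub_nonneg.2 hη.2) (hP0 s s')) (mul_nonneg hη.1 (hP'0 s s'))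
    · simp only [Pmix, Matrix.add_apply, Matrix.smul_apply, smul_eq_mul]
      rw [Finset.sum_add_distrib, ← Finset.mul_sum, ← Finset.mul_sum, hProw, hP'row]
      ring
  refine ⟨hunit, fun η hη => ?_, ?_⟩
  · exact (hasDerivAt_vmix γ P P' r r' η
      (hunit η hη)).differentiableAt.differentiableWithinAt
  · have h := hasDerivAt_vmix γ P P' r r' 0 (hunit 0 ⟨le_rfl, zero_le_one⟩)
    have hP : Pmix P P' 0 = P := by simp [Pmix]
    rw [hP] at h
    exact h.hasDerivWithinAt
end

section
/- For α ∈ [0,1], the pure-strategy min-max value of the quadratic game on [−1,1] satisfies inf_{b ∈ [−1,1]} sup_{a ∈ [−1,1]} ((1−α)a + αb)² = (1−α)², with the infimum and supremum attained. Consequently, for every α ∈ (0,1), max_{a ∈ [−1,1]} min_{b ∈ [−1,1]} ((1−α)a + αb)² < min_{b ∈ [−1,1]} max_{a ∈ [−1,1]} ((1−α)a + αb)², i.e., strong duality fails on deterministic (pure) strategies. -/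
/-!
For a fixed adversary action `b`, the agent's best reply is the endpoint `±1` with the sign of `b`,
so the inner supremum is `((1 - α) + α * |b|) ^ 2` (`isGreatest_reply`), which is smallest at
`b = 0`, with value `(1 - α) ^ 2`.

For the strict gap, the adversary answers `a` with `b = -(1 - α) * a`. The executed action is then
`(1 - α) ^ 2 * a`, so the max-min value is at most `(1 - α) ^ 4`, which is below `(1 - α) ^ 2` when
`0 < α < 1`.
-/

lemma isGreatest_reply (α : ℝ) (hα : α ∈ Set.Icc (0:ℝ) 1) (b : ℝ) :
    IsGreatest (Set.range fun a : Set.Icc (-1:ℝ) 1 => ((1 - α) * (a : ℝ) + α * b) ^ 2)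
      (((1 - α) + α * |b|) ^ 2) := by
  obtain ⟨h0, h1⟩ := hα
  constructor
  · rcases abs_cases b with ⟨hb, _⟩ | ⟨hb, _⟩
    · exact ⟨⟨1, by norm_num⟩, by simp only [hb]; ring⟩
    · exact ⟨⟨-1, by norm_num⟩, by simp only [hb]; ring⟩
  · rintro _ ⟨⟨a, ha⟩, rfl⟩
    have ha' : |a| ≤ 1 := abs_le.2 ha
    apply sq_le_sq'
    · nlinarith [neg_abs_le a, neg_abs_le b]
    · nlinarith [le_abs_self a, le_abs_self b]

theorem stmt17 (α : ℝ) (hα : α ∈ Set.Icc (0:ℝ) 1) :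
    (⨅ b : Set.Icc (-1:ℝ) 1, ⨆ a : Set.Icc (-1:ℝ) 1, ((1 - α) * (a : ℝ) + α * (b : ℝ)) ^ 2)
      = (1 - α) ^ 2
    ∧ (∀ b : Set.Icc (-1:ℝ) 1, ∃ a0 : Set.Icc (-1:ℝ) 1, ∀ a : Set.Icc (-1:ℝ) 1,
        ((1 - α) * (a : ℝ) + α * (b : ℝ)) ^ 2 ≤ ((1 - α) * (a0 : ℝ) + α * (b : ℝ)) ^ 2)
    ∧ (∃ b0 : Set.Icc (-1:ℝ) 1, ∀ b : Set.Icc (-1:ℝ) 1,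
        (⨆ a : Set.Icc (-1:ℝ) 1, ((1 - α) * (a : ℝ) + α * (b0 : ℝ)) ^ 2)
          ≤ ⨆ a : Set.Icc (-1:ℝ) 1, ((1 - α) * (a : ℝ) + α * (b : ℝ)) ^ 2)
    ∧ (α ∈ Set.Ioo (0:ℝ) 1 →
        (⨆ a : Set.Icc (-1:ℝ) 1, ⨅ b : Set.Icc (-1:ℝ) 1,
            ((1 - α) * (a : ℝ) + α * (b : ℝ)) ^ 2)
          < ⨅ b : Set.Icc (-1:ℝ) 1, ⨆ a : Set.Icc (-1:ℝ) 1,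
            ((1 - α) * (a : ℝ) + α * (b : ℝ)) ^ 2) := by
  have hsup : ∀ b : ℝ, (⨆ a : Set.Icc (-1:ℝ) 1, ((1 - α) * (a : ℝ) + α * b) ^ 2)
      = ((1 - α) + α * |b|) ^ 2 := fun b => (isGreatest_reply α hα b).csSup_eq
  have hle : ∀ b : ℝ, (1 - α) ^ 2 ≤ ((1 - α) + α * |b|) ^ 2 := fun b =>
    pow_le_pow_left₀ (sub_nonneg.2 hα.2) (le_add_of_nonneg_right (mul_nonneg hα.1 (abs_nonneg b))) 2
  have hinf : (⨅ b : Set.Icc (-1:ℝ) 1, ⨆ a : Set.Icc (-1:ℝ) 1,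
      ((1 - α) * (a : ℝ) + α * (b : ℝ)) ^ 2) = (1 - α) ^ 2 := by
    simp only [hsup]
    refine IsLeast.csInf_eq ⟨⟨⟨0, by norm_num⟩, by simp⟩, ?_⟩
    rintro _ ⟨b, rfl⟩
    exact hle b
  refine ⟨hinf, fun b => ?_, ⟨⟨0, by norm_num⟩, fun b => ?_⟩, fun hα' => ?_⟩
  · obtain ⟨⟨a0, ha0⟩, hub⟩ := isGreatest_reply α hα b
    exact ⟨a0, fun a => (hub ⟨a, rfl⟩).trans_eq ha0.symm⟩
  · rw [hsup, hsup, abs_zero, mul_zero, add_zero]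
    exact hle b
  · rw [hinf]
    obtain ⟨h0, h1⟩ := hα'
    have : Nonempty (Set.Icc (-1:ℝ) 1) := ⟨⟨0, by norm_num⟩⟩
    have hlt : ((1 - α) ^ 2) ^ 2 < (1 - α) ^ 2 :=
      pow_lt_pow_left₀ (by nlinarith) (sq_nonneg _) two_ne_zero
    refine lt_of_le_of_lt (ciSup_le fun a => ?_) hlt
    obtain ⟨a, ha1, ha2⟩ := a
    have hbdd : BddBelow (Set.range fun b : Set.Icc (-1:ℝ) 1 =>
        ((1 - α) * a + α * (b : ℝ)) ^ 2) :=
      ⟨0, by rintro _ ⟨b, rfl⟩; exact sq_nonneg _⟩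
    refine (ciInf_le hbdd ⟨-((1 - α) * a), by constructor <;> nlinarith⟩).trans ?_
    have ha : a ^ 2 ≤ 1 := by nlinarith
    calc ((1 - α) * a + α * -((1 - α) * a)) ^ 2 = ((1 - α) ^ 2) ^ 2 * a ^ 2 := by ring
      _ ≤ ((1 - α) ^ 2) ^ 2 := mul_le_of_le_one_right (sq_nonneg _) ha
end

section
/- Let α ∈ [0,1] and let μ be the uniform distribution on {−1, 1} (a mixed strategy on [−1,1]). Then min_{b ∈ [−1,1]} E_{a∼μ}[ ((1−α)a + αb)² ] = (1−α)², attained at b = 0. Consequently, for every α ∈ (0,1), max_{a ∈ [−1,1]} min_{b ∈ [−1,1]} ((1−α)a + αb)² < sup_{μ ∈ P([−1,1])} min_{b ∈ [−1,1]} E_{a∼μ}[ ((1−α)a + αb)² ], where P([−1,1]) is the set of Borel probability measures on [−1,1]; that is, in this NR-MDP the best stochastic agent policy is strictly better than every deterministic agent policy. -/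
/-!
Against the fair coin on `{-1, 1}` the cross term of the square averages out, so the expected reward
is `(1 - α)² + α² b²` (`integral_coin`), minimised at `b = 0`.

Against a deterministic `a`, the adversary's answer `b = -(1 - α) a` leaves the reward
`(1 - α)⁴ a² ≤ (1 - α)⁴`, uniformly in `a`, and `(1 - α)⁴ < (1 - α)²` for `α ∈ (0, 1)`.
The supremum over mixed strategies is over a family bounded by `1`, hence is at least the value
`(1 - α)²` of the coin.
-/

open MeasureTheory

/-- The uniform distribution on `{-1, 1}`, as a measure on `[-1, 1]`. -/
noncomputable def coin : Measure (Set.Icc (-1:ℝ) 1) :=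
  (1 / 2 : ENNReal) • Measure.dirac (⟨-1, by norm_num⟩ : Set.Icc (-1:ℝ) 1)
    + (1 / 2 : ENNReal) • Measure.dirac (⟨1, by norm_num⟩ : Set.Icc (-1:ℝ) 1)

instance isProbabilityMeasure_coin : IsProbabilityMeasure coin :=
  ⟨by simp [coin, ENNReal.inv_two_add_inv_two]⟩

lemma integrable_reward (μ : Measure (Set.Icc (-1:ℝ) 1)) [IsFiniteMeasure μ] (α b : ℝ) :
    Integrable (fun a : Set.Icc (-1:ℝ) 1 => ((1 - α) * (a : ℝ) + α * b) ^ 2) μ :=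
  Continuous.integrable_of_hasCompactSupport (by fun_prop)
    (HasCompactSupport.of_compactSpace _)

lemma integral_coin (α b : ℝ) :
    ∫ a, ((1 - α) * (a : ℝ) + α * b) ^ 2 ∂coin = (1 - α) ^ 2 + α ^ 2 * b ^ 2 := by
  have h2 : (1 / 2 : ENNReal) ≠ ⊤ := by simp
  rw [coin, integral_add_measure ((integrable_reward _ α b).smul_measure h2)
    ((integrable_reward _ α b).smul_measure h2), integral_smul_measure, integral_smul_measure,
    integral_dirac, integral_dirac]
  simp
  ring

lemma bddBelow_reward (α : ℝ) (μ : Measure (Set.Icc (-1:ℝ) 1)) :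
    BddBelow (Set.range fun b : Set.Icc (-1:ℝ) 1 =>
      ∫ a, ((1 - α) * (a : ℝ) + α * (b : ℝ)) ^ 2 ∂μ) :=
  ⟨0, by rintro _ ⟨b, rfl⟩; exact integral_nonneg fun a => sq_nonneg _⟩

lemma iInf_coin (α : ℝ) :
    (⨅ b : Set.Icc (-1:ℝ) 1, ∫ a, ((1 - α) * (a : ℝ) + α * (b : ℝ)) ^ 2 ∂coin)
      = (1 - α) ^ 2 := by
  have : Nonempty (Set.Icc (-1:ℝ) 1) := ⟨⟨0, by norm_num⟩⟩
  apply le_antisymm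
  · refine (ciInf_le (bddBelow_reward α coin) ⟨0, by norm_num⟩).trans ?_
    rw [integral_coin]
    simp
  · refine le_ciInf fun b => ?_
    rw [integral_coin]
    nlinarith [mul_nonneg (sq_nonneg α) (sq_nonneg (b : ℝ))]

/-- The adversary's answer `b = 0` keeps every mixed strategy's value at most `1`. -/
lemma bddAbove_value (α : ℝ) (hα : α ∈ Set.Icc (0:ℝ) 1) :
    BddAbove (Set.range fun μ : ProbabilityMeasure (Set.Icc (-1:ℝ) 1) =>
      ⨅ b : Set.Icc (-1:ℝ) 1, ∫ a, ((1 - α) * (a : ℝ) + α * (b : ℝ)) ^ 2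
        ∂(μ : Measure (Set.Icc (-1:ℝ) 1))) := by
  refine ⟨1, ?_⟩
  rintro _ ⟨μ, rfl⟩
  refine (ciInf_le (bddBelow_reward α μ) ⟨0, by norm_num⟩).trans ?_
  calc _ ≤ ∫ _a, (1 : ℝ) ∂(μ : Measure (Set.Icc (-1:ℝ) 1)) := by
        refine integral_mono (integrable_reward _ α 0) (integrable_const _) fun a => ?_
        obtain ⟨a, ha1, ha2⟩ := a
        obtain ⟨h0, h1⟩ := hα
        simp only [mul_zero, add_zero]
        rw [sq_le_one_iff_abs_le_one, abs_mul]
        exact mul_le_one₀ (abs_le.2 ⟨by linarith, by linarith⟩) (abs_nonneg _)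
          (abs_le.2 ⟨ha1, ha2⟩)
    _ = 1 := by simp

lemma iInf_pure_le (α : ℝ) (hα : α ∈ Set.Icc (0:ℝ) 1) (a : Set.Icc (-1:ℝ) 1) :
    (⨅ b : Set.Icc (-1:ℝ) 1, ((1 - α) * (a : ℝ) + α * (b : ℝ)) ^ 2) ≤ (1 - α) ^ 4 := by
  obtain ⟨a, ha1, ha2⟩ := a
  obtain ⟨h0, h1⟩ := hα
  have hb : -((1 - α) * a) ∈ Set.Icc (-1:ℝ) 1 := by
    constructor <;> nlinarith
  refine (ciInf_le ⟨0, ?_⟩ ⟨_, hb⟩).trans ?_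
  · rintro _ ⟨b, rfl⟩
    exact sq_nonneg _
  · have ha : a ^ 2 ≤ 1 := by nlinarith
    calc _ = (1 - α) ^ 4 * a ^ 2 := by ring
      _ ≤ (1 - α) ^ 4 := mul_le_of_le_one_right (by positivity) ha

theorem stmt18 (α : ℝ) (hα : α ∈ Set.Icc (0:ℝ) 1) :
    (∀ μ : ProbabilityMeasure (Set.Icc (-1:ℝ) 1),
      (μ : Measure (Set.Icc (-1:ℝ) 1))
          = (1 / 2 : ENNReal) • Measure.dirac (⟨-1, by norm_num⟩ : Set.Icc (-1:ℝ) 1)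
            + (1 / 2 : ENNReal) • Measure.dirac (⟨1, by norm_num⟩ : Set.Icc (-1:ℝ) 1) →
        (⨅ b : Set.Icc (-1:ℝ) 1,
            ∫ a, ((1 - α) * (a : ℝ) + α * (b : ℝ)) ^ 2 ∂(μ : Measure (Set.Icc (-1:ℝ) 1)))
          = (1 - α) ^ 2
        ∧ (∫ a, ((1 - α) * (a : ℝ)
              + α * ((⟨0, by norm_num⟩ : Set.Icc (-1:ℝ) 1) : ℝ)) ^ 2
              ∂(μ : Measure (Set.Icc (-1:ℝ) 1)))
            = (1 - α) ^ 2
        ∧ (∀ b : Set.Icc (-1:ℝ) 1, (1 - α) ^ 2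
            ≤ ∫ a, ((1 - α) * (a : ℝ) + α * (b : ℝ)) ^ 2
                ∂(μ : Measure (Set.Icc (-1:ℝ) 1))))
    ∧ (α ∈ Set.Ioo (0:ℝ) 1 →
        (⨆ a : Set.Icc (-1:ℝ) 1, ⨅ b : Set.Icc (-1:ℝ) 1,
            ((1 - α) * (a : ℝ) + α * (b : ℝ)) ^ 2)
          < ⨆ μ : ProbabilityMeasure (Set.Icc (-1:ℝ) 1), ⨅ b : Set.Icc (-1:ℝ) 1,
              ∫ a, ((1 - α) * (a : ℝ) + α * (b : ℝ)) ^ 2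
                ∂(μ : Measure (Set.Icc (-1:ℝ) 1))) := by
  refine ⟨?_, fun h => ?_⟩
  · intro μ hμ
    change (μ : Measure (Set.Icc (-1:ℝ) 1)) = coin at hμ
    rw [hμ]
    refine ⟨iInf_coin α, ?_, fun b => ?_⟩
    · rw [integral_coin]
      simp
    · rw [integral_coin]
      nlinarith [mul_nonneg (sq_nonneg α) (sq_nonneg (b : ℝ))]
  · have : Nonempty (Set.Icc (-1:ℝ) 1) := ⟨⟨0, by norm_num⟩⟩
    obtain ⟨h0, h1⟩ := h
    calc _ ≤ (1 - α) ^ 4 := ciSup_le (iInf_pure_le α hα)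
      _ < (1 - α) ^ 2 :=
        pow_lt_pow_right_of_lt_one₀ (by linarith) (by linarith) (by norm_num)
      _ = _ := (iInf_coin α).symm
      _ ≤ _ := le_ciSup (bddAbove_value α hα) ⟨coin, isProbabilityMeasure_coin⟩
end
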